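/- Let H be a 2D harmonic fourth-order tensor with a = H 1 1 1 1 and b = H 1 1 1 2, and let θ ∈ ℝ. Then the rotated tensor g(θ)⋆H, where (g(θ)⋆H) i j k l = Σₚqrs g(θ) i p · g(θ) j q · g(θ) k r · g(θ) l s · H p q r s and g(θ) is the rotation matrix [[cos θ, −sin θ], [sin θ, cos θ]], is again a 2D harmonic fourth-order tensor, with determining components (g(θ)⋆H) 1 1 1 1 = a·cos(4θ) − b·sin(4θ) and (g(θ)⋆H) 1 1 1 2 = a·sin(4θ) + b·cos(4θ). -/

import Mathlib

open Finset

noncomputable section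

/-- A fourth-order tensor on `ℝ²`. -/
abbrev Tens4 := Fin 2 → Fin 2 → Fin 2 → Fin 2 → ℝ

/-- Kronecker delta on `Fin 2`. -/
def kdelta (i j : Fin 2) : ℝ := if i = j then 1 else 0

/-- The isotropic fourth-order tensor `J`. -/
def Jten (i j k l : Fin 2) : ℝ :=
  (kdelta i k * kdelta j l + kdelta i l * kdelta j k) / 2 - kdelta i j * kdelta k l / 2

/-- A 2D elasticity tensor: minor and major index symmetries. -/
def IsElas (C : Tens4) : Prop :=
  (∀ i j k l, C i j k l = C j i k l) ∧ (∀ i j k l, C i j k l = C i j l k) ∧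
    (∀ i j k l, C i j k l = C k l i j)

/-- Dilatation tensor `d(C)ᵢⱼ = Σₖ C k k i j`. -/
def dil (C : Tens4) (i j : Fin 2) : ℝ := ∑ k, C k k i j

/-- Voigt tensor `v(C)ᵢⱼ = Σₖ C k i k j`. -/
def voigt (C : Tens4) (i j : Fin 2) : ℝ := ∑ k, C k i k j

/-- Shear modulus `μ(C)`. -/
def muC (C : Tens4) : ℝ := (2 * ∑ i, voigt C i i - ∑ i, dil C i i) / 8

/-- 2D bulk modulus `κ(C)`. -/
def kappaC (C : Tens4) : ℝ := (∑ i, dil C i i) / 4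

/-- Deviatoric part `d'(C)` of the dilatation tensor. -/
def devC (C : Tens4) (i j : Fin 2) : ℝ := dil C i j - (∑ k, dil C k k) / 2 * kdelta i j

/-- Harmonic (fourth-order) part `H(C)` of the elasticity tensor. -/
def harmC (C : Tens4) (i j k l : Fin 2) : ℝ :=
  C i j k l - 2 * muC C * Jten i j k l - kappaC C * kdelta i j * kdelta k l
    - (kdelta i j * devC C k l + devC C i j * kdelta k l) / 2

/-- A 2D harmonic fourth-order tensor: totally symmetric (invariant under all
permutations of its four indices) and traceless. -/
def IsHarmonic (H : Tens4) : Prop :=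
  (∀ (σ : Equiv.Perm (Fin 4)) (v : Fin 4 → Fin 2),
      H (v (σ 0)) (v (σ 1)) (v (σ 2)) (v (σ 3)) = H (v 0) (v 1) (v 2) (v 3)) ∧
    (∀ i j : Fin 2, ∑ k, H k k i j = 0)

/-- Rotation matrix of angle `θ`. -/
def rot (θ : ℝ) : Matrix (Fin 2) (Fin 2) ℝ :=
  !![Real.cos θ, -Real.sin θ; Real.sin θ, Real.cos θ]

/-- Action `g ⋆ C` of a `2×2` matrix `g` on a fourth-order tensor `C`. -/
def act (g : Matrix (Fin 2) (Fin 2) ℝ) (C : Tens4) (i j k l : Fin 2) : ℝ :=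
  ∑ p, ∑ q, ∑ r, ∑ s, g i p * g j q * g k r * g l s * C p q r s

/-- `C` is orthotropic: in some rotated basis, the components `1112` and `1222` vanish. -/
def IsOrtho (C : Tens4) : Prop :=
  ∃ θ : ℝ, act (rot θ) C 0 0 0 1 = 0 ∧ act (rot θ) C 0 1 1 1 = 0

/-!
The space of harmonic tensors is the real part of the complex line spanned by the fourth tensor
power of the isotropic vector `(1, -i)`: identifying the determining components `(a, b)` with
`z = a + b i`, one has `H i j k l = Re (z uᵢ uⱼ uₖ uₗ)` for `u = (1, -i)`. The rotation of angle `θ`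
has `u` as an eigenvector with eigenvalue `exp (i θ)`, so it multiplies `z` by `exp (4 i θ)`.
-/

open scoped Matrix

namespace IsHarmonic

variable {H T : Tens4}

lemma apply_swap_zero_one (hH : IsHarmonic H) (i j k l : Fin 2) : H i j k l = H j i k l := by
  simpa [Equiv.swap_apply_def] using hH.1 (Equiv.swap 0 1) ![j, i, k, l]

lemma apply_swap_one_two (hH : IsHarmonic H) (i j k l : Fin 2) : H i j k l = H i k j l := by
  simpa [Equiv.swap_apply_def] using hH.1 (Equiv.swap 1 2) ![i, k, j, l]

lemma apply_swap_two_three (hH : IsHarmonic H) (i j k l : Fin 2) : H i j k l = H i j l k := by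
  simpa [Equiv.swap_apply_def] using hH.1 (Equiv.swap 2 3) ![i, j, l, k]

lemma apply_swap_pairs (hH : IsHarmonic H) (i j k l : Fin 2) : H i j k l = H k l i j := by
  rw [hH.apply_swap_one_two, hH.apply_swap_zero_one, hH.apply_swap_two_three, hH.apply_swap_one_two]

lemma apply_one_one (hH : IsHarmonic H) (i j : Fin 2) : H 1 1 i j = -H 0 0 i j := by
  have trace := hH.2 i j
  rw [Fin.sum_univ_two] at trace
  linarith

lemma ext (hH : IsHarmonic H) (hT : IsHarmonic T) (h₀ : H 0 0 0 0 = T 0 0 0 0)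
    (h₁ : H 0 0 0 1 = T 0 0 0 1) : H = T := by
  have eq_zero_zero (k l : Fin 2) : H 0 0 k l = T 0 0 k l := by
    fin_cases k <;> fin_cases l
    · exact h₀
    · exact h₁
    · exact (hH.apply_swap_two_three ..).trans (h₁.trans (hT.apply_swap_two_three ..))
    · change H 0 0 1 1 = T 0 0 1 1
      rw [hH.apply_swap_pairs, hT.apply_swap_pairs, hH.apply_one_one, hT.apply_one_one, h₀]
  have eq_diag (i k l : Fin 2) : H i i k l = T i i k l := by
    fin_cases i
    · exact eq_zero_zero k l
    · change H 1 1 k l = T 1 1 k l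
      rw [hH.apply_one_one, hT.apply_one_one, eq_zero_zero]
  funext i j k l
  -- Among three indices in `Fin 2`, two coincide.
  obtain rfl | rfl | rfl : i = j ∨ i = k ∨ j = k := by omega
  · exact eq_diag i k l
  · rw [hH.apply_swap_one_two, hT.apply_swap_one_two, eq_diag]
  · rw [hH.apply_swap_zero_one, hT.apply_swap_zero_one, hH.apply_swap_one_two,
      hT.apply_swap_one_two, eq_diag]

end IsHarmonic

/-- The real part of the complex tensor `z u ⊗ u ⊗ u ⊗ u`; for isotropic `u` it turns the complex
number `z` into a harmonic tensor. -/
def reTensorPow (z : ℂ) (u : Fin 2 → ℂ) : Tens4 :=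
  fun i j k l => (z * (u i * u j * u k * u l)).re

lemma isHarmonic_reTensorPow (z : ℂ) {u : Fin 2 → ℂ} (hu : u ⬝ᵥ u = 0) :
    IsHarmonic (reTensorPow z u) := by
  refine ⟨fun σ v => ?_, fun i j => ?_⟩
  · have prod_perm := Equiv.prod_comp σ fun m => u (v m)
    simp only [Fin.prod_univ_four] at prod_perm
    simp only [reTensorPow, prod_perm]
  · calc ∑ k, reTensorPow z u k k i j = (z * ((u ⬝ᵥ u) * u i * u j)).re := by
          simp only [reTensorPow, dotProduct, sum_mul, mul_sum, Complex.re_sum]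
      _ = 0 := by simp [hu]

lemma reTensorPow_smul (z c : ℂ) (u : Fin 2 → ℂ) :
    reTensorPow z (c • u) = reTensorPow (z * c ^ 4) u := by
  funext i j k l
  simp only [reTensorPow, Pi.smul_apply, smul_eq_mul]
  ring_nf

lemma act_reTensorPow (g : Matrix (Fin 2) (Fin 2) ℝ) (z : ℂ) (u : Fin 2 → ℂ) :
    act g (reTensorPow z u) = reTensorPow z (g.map Complex.ofReal *ᵥ u) := by
  funext i j k l
  have expand : z * ((g.map Complex.ofReal *ᵥ u) i * (g.map Complex.ofReal *ᵥ u) j *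
        (g.map Complex.ofReal *ᵥ u) k * (g.map Complex.ofReal *ᵥ u) l) =
      ∑ p, ∑ q, ∑ r, ∑ s,
        ((g i p * g j q * g k r * g l s : ℝ) : ℂ) * (z * (u p * u q * u r * u s)) := by
    simp only [Matrix.mulVec, dotProduct, Matrix.map_apply, Fin.sum_univ_two]
    push_cast
    ring
  simp only [act, reTensorPow, expand, Complex.re_sum, Complex.re_ofReal_mul]

/-- The isotropic vector `(1, -i)`, a common eigenvector of all plane rotations. The sign is the
one for which the rotation of angle `θ` has eigenvalue `exp (i θ)` rather than its conjugate. -/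
def isotropicVec : Fin 2 → ℂ := ![1, -Complex.I]

lemma isotropicVec_dotProduct_self : isotropicVec ⬝ᵥ isotropicVec = 0 := by
  simp [isotropicVec]

lemma rot_mulVec_isotropicVec (θ : ℝ) :
    (rot θ).map Complex.ofReal *ᵥ isotropicVec = Complex.exp (θ * Complex.I) • isotropicVec := by
  rw [Complex.exp_mul_I]
  ext i
  fin_cases i
  · simp [rot, isotropicVec, Matrix.mulVec, dotProduct]
  · have second_row : Complex.sin θ - Complex.cos θ * Complex.I =
        (Complex.cos θ + Complex.sin θ * Complex.I) * -Complex.I := by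
      linear_combination Complex.sin θ * Complex.I_sq
    simpa [rot, isotropicVec, Matrix.mulVec, dotProduct, sub_eq_add_neg] using second_row

lemma act_rot_reTensorPow_isotropicVec (θ : ℝ) (z : ℂ) :
    act (rot θ) (reTensorPow z isotropicVec) =
      reTensorPow (z * Complex.exp ((4 * θ : ℝ) * Complex.I)) isotropicVec := by
  rw [act_reTensorPow, rot_mulVec_isotropicVec, reTensorPow_smul, ← Complex.exp_nat_mul]
  push_cast
  ring_nf

lemma reTensorPow_isotropicVec_zero_zero_zero_zero (z : ℂ) :
    reTensorPow z isotropicVec 0 0 0 0 = z.re := by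
  simp [reTensorPow, isotropicVec]

lemma reTensorPow_isotropicVec_zero_zero_zero_one (z : ℂ) :
    reTensorPow z isotropicVec 0 0 0 1 = z.im := by
  simp [reTensorPow, isotropicVec]

lemma IsHarmonic.eq_reTensorPow {H : Tens4} (hH : IsHarmonic H) :
    H = reTensorPow ⟨H 0 0 0 0, H 0 0 0 1⟩ isotropicVec :=
  hH.ext (isHarmonic_reTensorPow _ isotropicVec_dotProduct_self)
    (reTensorPow_isotropicVec_zero_zero_zero_zero ⟨_, _⟩).symm
    (reTensorPow_isotropicVec_zero_zero_zero_one ⟨_, _⟩).symm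

/-- Rotating a 2D harmonic fourth-order tensor by an angle `θ` yields
a harmonic tensor whose determining components `(a, b)` transform by the rotation of
angle `4θ`. -/
theorem rotation_of_harmonic_tensor (H : Tens4) (hH : IsHarmonic H) (θ : ℝ) :
    IsHarmonic (act (rot θ) H) ∧
      act (rot θ) H 0 0 0 0
        = H 0 0 0 0 * Real.cos (4 * θ) - H 0 0 0 1 * Real.sin (4 * θ) ∧
      act (rot θ) H 0 0 0 1
        = H 0 0 0 0 * Real.sin (4 * θ) + H 0 0 0 1 * Real.cos (4 * θ) := by
  have act_eq : act (rot θ) H = reTensorPow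
      (⟨H 0 0 0 0, H 0 0 0 1⟩ * Complex.exp ((4 * θ : ℝ) * Complex.I)) isotropicVec := by
    rw [← act_rot_reTensorPow_isotropicVec, ← hH.eq_reTensorPow]
  rw [act_eq]
  refine ⟨isHarmonic_reTensorPow _ isotropicVec_dotProduct_self, ?_, ?_⟩
  · rw [reTensorPow_isotropicVec_zero_zero_zero_zero, Complex.mul_re,
      Complex.exp_ofReal_mul_I_re, Complex.exp_ofReal_mul_I_im]
  · rw [reTensorPow_isotropicVec_zero_zero_zero_one, Complex.mul_im,
      Complex.exp_ofReal_mul_I_re, Complex.exp_ofReal_mul_I_im]
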